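/- Let (Ω, 𝒜, μ) be a measure space, p ∈ [1,∞), and T a positive C₀-semigroup on L_p(μ) with generator A. If V : Ω → [0,∞] is T-admissible, then T_{0,V} = (T_V)_{−V}, i.e., the strong limit s-lim_{ε→0+} T_{εV} equals the strong limit s-lim_{n→∞} T_{V − V∧n}. -/

import Mathlib

open MeasureTheory Filter Topology ENNReal

noncomputable section

namespace Absorption

variable {E : Type*} [NormedAddCommGroup E] [NormedSpace ℝ E]

/-- A one-parameter semigroup of bounded operators (for nonnegative times). -/
def IsSemigroup (T : ℝ → E →L[ℝ] E) : Prop :=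
  T 0 = ContinuousLinearMap.id ℝ E ∧
    ∀ s t : ℝ, 0 ≤ s → 0 ≤ t → T (s + t) = (T s).comp (T t)

/-- A `C₀`-semigroup: a one-parameter semigroup which is strongly continuous on `[0, ∞)`. -/
def IsC0Semigroup (T : ℝ → E →L[ℝ] E) : Prop :=
  IsSemigroup T ∧ ∀ f : E, ContinuousOn (fun t => T t f) (Set.Ici (0 : ℝ))

/-- `(f, g)` belongs to the graph of the generator of the semigroup `T`. -/
def InGenerator (T : ℝ → E →L[ℝ] E) (f g : E) : Prop :=
  Tendsto (fun t : ℝ => t⁻¹ • (T t f - f)) (𝓝[>] (0 : ℝ)) (𝓝 g)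

variable {Ω : Type*} [MeasurableSpace Ω]

/-- A function into a measurable space is *locally measurable* (w.r.t. `μ`) if on every set of
finite measure it coincides a.e. with a measurable function. -/
def LocallyMeasurable {α : Type*} [MeasurableSpace α] (μ : Measure Ω) (V : Ω → α) : Prop :=
  ∀ B : Set Ω, MeasurableSet B → μ B < ∞ →
    ∃ g : Ω → α, Measurable g ∧ ∀ᵐ ω ∂(μ.restrict B), V ω = g ω

/-- A set is a local `μ`-null set if its intersection with every measurable set of finite
measure is null. -/
def IsLocalNullSet (μ : Measure Ω) (N : Set Ω) : Prop :=
  ∀ B : Set Ω, MeasurableSet B → μ B < ∞ → μ (N ∩ B) = 0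

/-- Positivity of a family of operators on `L_p` (for positive times). -/
def IsPositiveSG {p : ℝ≥0∞} {μ : Measure Ω} [Fact (1 ≤ p)]
    (T : ℝ → Lp ℝ p μ →L[ℝ] Lp ℝ p μ) : Prop :=
  ∀ t : ℝ, 0 ≤ t → ∀ f : Lp ℝ p μ, 0 ≤ f → 0 ≤ T t f

/-- A band projection on the Banach lattice `L_p(μ)`: an idempotent operator `P`
with `0 ≤ P f ≤ f` for all `f ≥ 0`. -/
def IsBandProjection {p : ℝ≥0∞} {μ : Measure Ω} [Fact (1 ≤ p)]
    (P : Lp ℝ p μ →L[ℝ] Lp ℝ p μ) : Prop :=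
  P.comp P = P ∧ ∀ f : Lp ℝ p μ, 0 ≤ f → 0 ≤ P f ∧ P f ≤ f

/-- `S = (e^{t(A−W)})_{t ≥ 0}`: `S` is the `C₀`-semigroup whose generator is `A - W`,
where `A` is the generator of `T` and the bounded function `W` acts by multiplication. -/
def IsPerturbedSG (μ : Measure Ω) (p : ℝ≥0∞) [Fact (1 ≤ p)]
    (T S : ℝ → Lp ℝ p μ →L[ℝ] Lp ℝ p μ) (W : Ω → ℝ) : Prop :=
  IsC0Semigroup S ∧
    ∀ f g : Lp ℝ p μ, InGenerator S f g ↔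
      ∃ g₀ : Lp ℝ p μ, InGenerator T f g₀ ∧
        ⇑g =ᵐ[μ] fun ω => g₀ ω - W ω * f ω

/-- Same as `IsPerturbedSG`, for semigroups acting on a subspace `F` of `L_p(μ)`. -/
def IsPerturbedSGSub (μ : Measure Ω) (p : ℝ≥0∞) [Fact (1 ≤ p)] (F : Submodule ℝ (Lp ℝ p μ))
    (T S : ℝ → F →L[ℝ] F) (W : Ω → ℝ) : Prop :=
  IsC0Semigroup S ∧
    ∀ f g : F, InGenerator S f g ↔
      ∃ g₀ : F, InGenerator T f g₀ ∧
        ⇑(g : Lp ℝ p μ) =ᵐ[μ] fun ω => (g₀ : Lp ℝ p μ) ω - W ω * (f : Lp ℝ p μ) ω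

/-- The truncation `V ∧ n` of `V : Ω → [0,∞]`, as a real-valued function. -/
def trunc (V : Ω → ℝ≥0∞) (n : ℕ) : Ω → ℝ := fun ω => (min (V ω) (n : ℝ≥0∞)).toReal

/-- The scalar multiple `ε V` of an absorption rate `V : Ω → [0,∞]`. -/
def smulRate (ε : ℝ) (V : Ω → ℝ≥0∞) : Ω → ℝ≥0∞ := fun ω => ENNReal.ofReal ε * V ω

/-- The absorption rate `V - V ∧ n` (with value `∞` wherever `V = ∞`). -/
def resid (V : Ω → ℝ≥0∞) (n : ℕ) : Ω → ℝ≥0∞ := fun ω => V ω - min (V ω) (n : ℝ≥0∞)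

/-- `TV` is the absorption semigroup `T_V` associated with the rate `V : Ω → [0,∞]`, i.e.
the strong limit `T_V(t) = s-lim_{n→∞} e^{t(A - V∧n)}` (for `t ≥ 0`). -/
def IsAbsorptionSG (μ : Measure Ω) (p : ℝ≥0∞) [Fact (1 ≤ p)]
    (T : ℝ → Lp ℝ p μ →L[ℝ] Lp ℝ p μ) (V : Ω → ℝ≥0∞)
    (TV : ℝ → Lp ℝ p μ →L[ℝ] Lp ℝ p μ) : Prop :=
  ∃ S : ℕ → ℝ → Lp ℝ p μ →L[ℝ] Lp ℝ p μ,
    (∀ n, IsPerturbedSG μ p T (S n) (trunc V n)) ∧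
    ∀ t : ℝ, 0 ≤ t → ∀ f, Tendsto (fun n => S n t f) atTop (𝓝 (TV t f))

/-- `V : Ω → [0,∞]` is `T`-admissible: `V` is locally measurable, the strong limits
`T_V(t) = s-lim_{n→∞} e^{t(A - V∧n)}` exist, and `T_V` is a `C₀`-semigroup. -/
def Admissible (μ : Measure Ω) (p : ℝ≥0∞) [Fact (1 ≤ p)]
    (T : ℝ → Lp ℝ p μ →L[ℝ] Lp ℝ p μ) (V : Ω → ℝ≥0∞) : Prop :=
  LocallyMeasurable μ V ∧
  ∃ TV, IsAbsorptionSG μ p T V TV ∧ IsC0Semigroup TV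

/-- The truncation `(V ∧ n) ∨ (−n)` of an extended-real-valued rate, as a real function. -/
def truncE (V : Ω → EReal) (n : ℕ) : Ω → ℝ :=
  fun ω => (max (min (V ω) (n : EReal)) (-(n : EReal))).toReal

/-- `TV` is the absorption semigroup `T_V` of an extended-real-valued rate `V`:
`T_V(t) = s-lim_{n→∞} e^{t(A - (V∧n)∨(−n))}` (for `t ≥ 0`). -/
def IsAbsorptionSGE (μ : Measure Ω) (p : ℝ≥0∞) [Fact (1 ≤ p)]
    (T : ℝ → Lp ℝ p μ →L[ℝ] Lp ℝ p μ) (V : Ω → EReal)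
    (TV : ℝ → Lp ℝ p μ →L[ℝ] Lp ℝ p μ) : Prop :=
  ∃ S : ℕ → ℝ → Lp ℝ p μ →L[ℝ] Lp ℝ p μ,
    (∀ n, IsPerturbedSG μ p T (S n) (truncE V n)) ∧
    ∀ t : ℝ, 0 ≤ t → ∀ f, Tendsto (fun n => S n t f) atTop (𝓝 (TV t f))

/-- `T`-admissibility for an extended-real-valued absorption rate `V`. -/
def AdmissibleE (μ : Measure Ω) (p : ℝ≥0∞) [Fact (1 ≤ p)]
    (T : ℝ → Lp ℝ p μ →L[ℝ] Lp ℝ p μ) (V : Ω → EReal) : Prop :=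
  LocallyMeasurable μ V ∧
  ∃ TV, IsAbsorptionSGE μ p T V TV ∧ IsC0Semigroup TV

/-!
By the Trotter product formula, `e^{t(A - W)}` for bounded `W` is the strong limit of
`(e^{-tW/n} T(t/n))^n`. Pointwise inequalities `g ≤ a ^ θ * b ^ (1 - θ)` survive both the
application of a positive operator and the multiplication of `g`, `a`, `b` by `e^{-W}`, `e^{-W₁}`,
`e^{-W₂}` when `θ W₁ + (1 - θ) W₂ ≤ W`. Hence `W ↦ e^{t(A - W)} f` is convex for `f ≥ 0`, and
letting the truncations increase, so is `U ↦ T_U(t) f`. Measurability of `W f` for `f ∈ L_p` comes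
from the meaning of `A - W`: it holds for `f` in the domain of the generator, which is dense.

The theorem follows from two instances of this convexity. Since `ε V ≤ (V - V ∧ n) + ε n`, one has
`e^{-tεn} T_{V - V∧n}(t) f ≤ T_{εV}(t) f`; let first `ε → 0` and then `n → ∞`. Conversely, if
`m ≤ ε n` then `ε (V - V ∧ n) + (1 - ε) (εV ∧ m) ≤ ε V`, whence
`T_{εV}(t) f ≤ ε T_{V - V∧n}(t) f + (1 - ε) T_{εV∧m}(t) f`; letting `n → ∞` and then `m → ∞`, the
last term becomes `(1 - ε) T_{εV}(t) f`, which is absorbed into the left-hand side.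
-/

section StrongConvergence

variable {ι : Type*} {l : Filter ι} {D : ι → E →L[ℝ] E} {C : ℝ}

lemma tendsto_apply_of_eventually_norm_le (hD : ∀ᶠ i in l, ‖D i‖ ≤ C) {x : ι → E} {x₀ y : E}
    (hDx₀ : Tendsto (fun i => D i x₀) l (𝓝 y)) (hx : Tendsto x l (𝓝 x₀)) :
    Tendsto (fun i => D i (x i)) l (𝓝 y) := by
  have hdiff : Tendsto (fun i => D i (x i - x₀)) l (𝓝 0) := by
    refine squeeze_zero_norm' (hD.mono fun i hi => (D i).le_of_opNorm_le hi _) ?_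
    simpa using ((hx.sub_const x₀).norm.const_mul C)
  simpa using hDx₀.add hdiff

lemma tendsto_apply_zero_of_dense (hD : ∀ᶠ i in l, ‖D i‖ ≤ C) {s : Set E} (hs : Dense s)
    (h : ∀ y ∈ s, Tendsto (fun i => D i y) l (𝓝 0)) (x : E) :
    Tendsto (fun i => D i x) l (𝓝 0) := by
  rw [Metric.tendsto_nhds]
  intro ε hε
  obtain ⟨y, hy, hxy⟩ := hs.exists_dist_lt x (ε := ε / (2 * (|C| + 1))) (by positivity)
  rw [dist_eq_norm, lt_div_iff₀ (by positivity)] at hxy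
  filter_upwards [hD, Metric.tendsto_nhds.1 (h y hy) (ε / 2) (half_pos hε)] with i hi hiy
  rw [dist_zero_right] at hiy ⊢
  have hdiff : ‖D i (x - y)‖ ≤ |C| * ‖x - y‖ := (D i).le_of_opNorm_le (hi.trans (le_abs_self C)) _
  calc ‖D i x‖ = ‖D i (x - y) + D i y‖ := by rw [← map_add, sub_add_cancel]
    _ ≤ |C| * ‖x - y‖ + ‖D i y‖ := (norm_add_le _ _).trans (add_le_add_left hdiff _)
    _ < ε := by nlinarith [norm_nonneg (x - y)]

lemma tendstoUniformlyOn_zero_of_isCompact (hD : ∀ᶠ i in l, ‖D i‖ ≤ C)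
    (h : ∀ x, Tendsto (fun i => D i x) l (𝓝 0)) {s : Set E} (hs : IsCompact s) :
    TendstoUniformlyOn (fun i => ⇑(D i)) 0 l s := by
  rw [← tendstoLocallyUniformlyOn_iff_tendstoUniformlyOn_of_compact hs,
    tendstoLocallyUniformlyOn_iff_forall_tendsto]
  intro x _
  have hprod : Tendsto (fun q : ι × E => D q.1 q.2) (l ×ˢ 𝓝[s] x) (𝓝 0) :=
    tendsto_apply_of_eventually_norm_le (D := fun q : ι × E => D q.1) (hD.prod_inl _)
      ((h x).comp tendsto_fst) (tendsto_snd.mono_right nhdsWithin_le_nhds)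
  simpa [tendsto_uniformity_iff_dist_tendsto_zero] using hprod.norm

end StrongConvergence

section Semigroup

variable {T S : ℝ → E →L[ℝ] E}

lemma IsSemigroup.zero_apply (hT : IsSemigroup T) (x : E) : T 0 x = x := by
  simp [hT.1]

lemma IsSemigroup.add_apply (hT : IsSemigroup T) {s t : ℝ} (hs : 0 ≤ s) (ht : 0 ≤ t) (x : E) :
    T (s + t) x = T s (T t x) := by
  simp [hT.2 s t hs ht]

lemma IsSemigroup.pow_eq (hT : IsSemigroup T) {τ : ℝ} (hτ : 0 ≤ τ) (n : ℕ) :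
    T τ ^ n = T (n * τ) := by
  induction n with
  | zero => simp [hT.1, ContinuousLinearMap.one_def]
  | succ n ih =>
    rw [pow_succ, ih, Nat.cast_succ, add_mul, one_mul, hT.2 _ _ (by positivity) hτ]
    rfl

lemma InGenerator.const_smul {f g : E} (h : InGenerator T f g) (c : ℝ) :
    InGenerator T (c • f) (c • g) := by
  refine (Tendsto.const_smul h c).congr fun t => ?_
  rw [map_smul, ← smul_sub, smul_comm]

lemma InGenerator.apply {f g : E} (h : InGenerator T f g) (hT : IsSemigroup T) {r : ℝ}
    (hr : 0 ≤ r) : InGenerator T (T r f) (T r g) := by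
  refine (((T r).continuous.tendsto g).comp h).congr' ?_
  filter_upwards [self_mem_nhdsWithin] with t ht
  have hcomm : T t (T r f) = T r (T t f) := by
    rw [← hT.add_apply (le_of_lt ht) hr, add_comm, hT.add_apply hr (le_of_lt ht)]
  simp [hcomm]

lemma IsC0Semigroup.continuous_apply_max (hT : IsC0Semigroup T) (f : E) :
    Continuous fun s => T (max s 0) f :=
  (hT.2 f).comp_continuous (continuous_id.max continuous_const) fun s => le_max_right s 0

variable [CompleteSpace E]

lemma IsC0Semigroup.exists_norm_le (hT : IsC0Semigroup T) (t : ℝ) :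
    ∃ K, 0 ≤ K ∧ ∀ s ∈ Set.Icc 0 t, ‖T s‖ ≤ K := by
  have hptwise (x : E) : ∃ C, ∀ s : Set.Icc 0 t, ‖T s x‖ ≤ C := by
    obtain ⟨C, hC⟩ := isCompact_Icc.exists_bound_of_continuousOn
      ((hT.2 x).mono fun s (hs : s ∈ Set.Icc 0 t) => hs.1)
    exact ⟨C, fun s => hC s s.2⟩
  obtain ⟨K, hK⟩ := banach_steinhaus (g := fun s : Set.Icc 0 t => T s) hptwise
  exact ⟨max K 0, le_max_right _ _, fun s hs => (hK ⟨s, hs⟩).trans (le_max_left _ _)⟩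

lemma IsC0Semigroup.tendsto_apply (hT : IsC0Semigroup T) {ι : Type*} {l : Filter ι} {s : ι → ℝ}
    {x : ι → E} {s₀ : ℝ} {x₀ : E} (hs₀ : 0 ≤ s₀) (hs : Tendsto s l (𝓝[Set.Ici 0] s₀))
    (hx : Tendsto x l (𝓝 x₀)) : Tendsto (fun i => T (s i) (x i)) l (𝓝 (T s₀ x₀)) := by
  obtain ⟨K, -, hK⟩ := hT.exists_norm_le (s₀ + 1)
  have hs' := tendsto_nhdsWithin_iff.1 hs
  refine tendsto_apply_of_eventually_norm_le (C := K) ?_ ((hT.2 x₀ s₀ hs₀).tendsto.comp hs) hx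
  filter_upwards [hs'.2, hs'.1.eventually (gt_mem_nhds (lt_add_one s₀))] with i hi₀ hi
  exact hK _ ⟨hi₀, hi.le⟩

lemma IsC0Semigroup.inGenerator_integral (hT : IsC0Semigroup T) (f : E) {h : ℝ} (hh : 0 ≤ h) :
    InGenerator T (∫ s in (0 : ℝ)..h, T (max s 0) f) (T h f - f) := by
  have hu := hT.continuous_apply_max f
  have hint (a b : ℝ) : IntervalIntegrable (fun s => T (max s 0) f) volume a b :=
    hu.intervalIntegrable a b
  have hshift {t : ℝ} (ht : 0 ≤ t) : T t (∫ s in (0 : ℝ)..h, T (max s 0) f) =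
      (∫ s in (0 : ℝ)..(t + h), T (max s 0) f) - ∫ s in (0 : ℝ)..t, T (max s 0) f := by
    rw [intervalIntegral.integral_interval_sub_left (hint _ _) (hint _ _),
      ← (T t).intervalIntegral_comp_comm (hint 0 h), ← add_zero t, add_assoc, zero_add,
      ← intervalIntegral.integral_comp_add_left, add_zero]
    refine intervalIntegral.integral_congr fun s hs => ?_
    have hs₀ : 0 ≤ s := by
      rw [Set.uIcc_of_le hh] at hs
      exact hs.1
    simp only [max_eq_left hs₀, max_eq_left (add_nonneg ht hs₀), hT.1.add_apply ht hs₀]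
  have hderiv := ((hu.integral_hasStrictDerivAt 0 (0 + h)).hasDerivAt.comp_add_const 0 h).sub
    (hu.integral_hasStrictDerivAt 0 0).hasDerivAt
  rw [zero_add, max_eq_left hh, max_self, hT.1.zero_apply] at hderiv
  refine hderiv.tendsto_slope_zero_right.congr' ?_
  filter_upwards [self_mem_nhdsWithin] with t ht
  simp [hshift (le_of_lt ht)]

lemma IsC0Semigroup.tendsto_average (hT : IsC0Semigroup T) (f : E) :
    Tendsto (fun h : ℝ => h⁻¹ • ∫ s in (0 : ℝ)..h, T (max s 0) f) (𝓝[>] 0) (𝓝 f) := by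
  simpa [hT.1.zero_apply] using ((hT.continuous_apply_max f).integral_hasStrictDerivAt 0
    0).hasDerivAt.tendsto_slope_zero_right

lemma IsC0Semigroup.dense_generator_domain (hT : IsC0Semigroup T) :
    Dense {f | ∃ g, InGenerator T f g} := by
  intro f
  refine mem_closure_of_tendsto (hT.tendsto_average f) ?_
  filter_upwards [self_mem_nhdsWithin] with h hh
  exact ⟨_, (hT.inGenerator_integral f (le_of_lt hh)).const_smul h⁻¹⟩

lemma IsC0Semigroup.hasDerivWithinAt_apply_sub (hT : IsC0Semigroup T) (hS : IsSemigroup S)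
    {g y z : E} {r τ : ℝ} (hr : 0 ≤ r) (hrτ : r < τ) (hy : InGenerator S (S r g) y)
    (hz : InGenerator T (S r g) z) :
    HasDerivWithinAt (fun r => T (τ - r) (S r g)) (T (τ - r) (y - z)) (Set.Ici r) r := by
  rw [← hasDerivWithinAt_Ioi_iff_Ici, hasDerivWithinAt_iff_tendsto_slope' Set.self_notMem_Ioi]
  have hshift : Tendsto (fun x => x - r) (𝓝[>] r) (𝓝[>] 0) := by
    refine tendsto_nhdsWithin_iff.2
      ⟨?_, eventually_mem_nhdsWithin.mono fun x (hx : r < x) => sub_pos.2 hx⟩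
    simpa using ((continuous_sub_right r).tendsto r).mono_left nhdsWithin_le_nhds
  have hlt : ∀ᶠ x in 𝓝[>] r, x < τ := nhdsWithin_le_nhds (gt_mem_nhds hrτ)
  have hτx : Tendsto (fun x => τ - x) (𝓝[>] r) (𝓝[Set.Ici 0] (τ - r)) :=
    tendsto_nhdsWithin_iff.2 ⟨((continuous_const.sub continuous_id).tendsto r).mono_left
      nhdsWithin_le_nhds, hlt.mono fun x hx => sub_nonneg.2 hx.le⟩
  refine (hT.tendsto_apply (sub_nonneg.2 hrτ.le) hτx ((hy.sub hz).comp hshift)).congr' ?_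
  filter_upwards [self_mem_nhdsWithin, hlt] with x (hx : r < x) hxτ
  have hSx : S x g = S (x - r) (S r g) := by
    rw [← hS.add_apply (sub_nonneg.2 hx.le) hr, sub_add_cancel]
  have hTx : T (τ - r) (S r g) = T (τ - x) (T (x - r) (S r g)) := by
    rw [← hT.1.add_apply (sub_nonneg.2 hxτ.le) (sub_nonneg.2 hx.le), sub_add_sub_cancel]
  simp only [slope, Function.comp, vsub_eq_sub]
  rw [hSx, hTx, ← smul_sub, sub_sub_sub_cancel_right, map_smul, map_sub]

end Semigroup

section BoundedPerturbation

variable [CompleteSpace E] {T S : ℝ → E →L[ℝ] E} {B : E →L[ℝ] E}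

lemma exists_norm_sub_le_of_bounded_perturbation (hT : IsC0Semigroup T) (hS : IsC0Semigroup S)
    (hB : ∀ f g, InGenerator S f g → InGenerator T f (g + B f)) (t : ℝ) :
    ∃ C, ∀ τ ∈ Set.Icc 0 t, ‖S τ - T τ‖ ≤ C * τ := by
  obtain ⟨K, hK, hTK⟩ := hT.exists_norm_le t
  obtain ⟨M, hM, hSM⟩ := hS.exists_norm_le t
  refine ⟨K * (‖B‖ * M), fun τ hτ => ContinuousLinearMap.opNorm_le_bound _
    (mul_nonneg (by positivity) hτ.1) (hS.dense_generator_domain.induction ?_ ?_)⟩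
  · rintro f ⟨g, hfg⟩
    have hcont : ContinuousOn (fun r => T (τ - r) (S r f)) (Set.Icc 0 τ) := fun r hr =>
      hT.tendsto_apply (sub_nonneg.2 hr.2) (tendsto_nhdsWithin_iff.2
        ⟨((continuous_const.sub continuous_id).tendsto r).mono_left nhdsWithin_le_nhds,
          eventually_mem_nhdsWithin.mono fun x hx => sub_nonneg.2 hx.2⟩)
        ((hS.2 f).mono (fun x hx => hx.1) r hr)
    have hderiv : ∀ r ∈ Set.Ico 0 τ, HasDerivWithinAt (fun r => T (τ - r) (S r f))
        (T (τ - r) (-B (S r f))) (Set.Ici r) r := fun r hr => by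
      have hSr := hfg.apply hS.1 hr.1
      simpa using hT.hasDerivWithinAt_apply_sub hS.1 hr.1 hr.2 hSr (hB _ _ hSr)
    have hbound : ∀ r ∈ Set.Ico 0 τ, ‖T (τ - r) (-B (S r f))‖ ≤ K * (‖B‖ * (M * ‖f‖)) := by
      intro r hr
      refine (T _).le_of_opNorm_le_of_le (hTK _ ⟨by linarith [hr.2], by linarith [hr.1, hτ.2]⟩) ?_
      rw [norm_neg]
      exact B.le_opNorm_of_le ((S r).le_of_opNorm_le (hSM r ⟨hr.1, by linarith [hr.2, hτ.2]⟩) f)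
    have hle := norm_image_sub_le_of_norm_deriv_right_le_segment hcont hderiv hbound τ
      ⟨hτ.1, le_rfl⟩
    simp only [sub_self, sub_zero, hT.1.zero_apply, hS.1.zero_apply] at hle
    simpa [mul_assoc, mul_comm, mul_left_comm] using hle
  · exact isClosed_le (by fun_prop) (by fun_prop)

lemma eventually_norm_inv_smul_sub_le_of_bounded_perturbation (hT : IsC0Semigroup T)
    (hS : IsC0Semigroup S) (hB : ∀ f g, InGenerator S f g → InGenerator T f (g + B f)) :
    ∃ C, ∀ᶠ τ in 𝓝[>] (0 : ℝ), ‖τ⁻¹ • (S τ - T τ)‖ ≤ C := by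
  obtain ⟨C, hC⟩ := exists_norm_sub_le_of_bounded_perturbation hT hS hB 1
  refine ⟨C, ?_⟩
  filter_upwards [Ioc_mem_nhdsGT one_pos] with τ hτ
  rw [norm_smul, norm_inv, Real.norm_of_nonneg hτ.1.le, inv_mul_le_iff₀ hτ.1, mul_comm]
  exact hC τ ⟨hτ.1.le, hτ.2⟩

lemma tendsto_inv_smul_sub_of_bounded_perturbation (hT : IsC0Semigroup T) (hS : IsC0Semigroup S)
    (hB : ∀ f g, InGenerator S f g → InGenerator T f (g + B f)) (f : E) :
    Tendsto (fun τ : ℝ => τ⁻¹ • (S τ f - T τ f)) (𝓝[>] 0) (𝓝 (-B f)) := by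
  obtain ⟨C, hC⟩ := eventually_norm_inv_smul_sub_le_of_bounded_perturbation hT hS hB
  have hzero : Tendsto (fun τ : ℝ => (τ⁻¹ • (S τ - T τ) + B) f) (𝓝[>] 0) (𝓝 0) := by
    refine tendsto_apply_zero_of_dense (C := C + ‖B‖)
      (hC.mono fun τ hτ => (norm_add_le _ _).trans (by gcongr)) hS.dense_generator_domain ?_ f
    rintro g ⟨h, hg⟩
    have hsub := (hg.sub (hB g h hg)).add_const (B g)
    rw [sub_add_cancel_left, neg_add_cancel] at hsub
    refine hsub.congr fun τ => ?_
    simp [← smul_sub]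
  simpa using hzero.sub_const (B f)

end BoundedPerturbation

section ProductFormula

lemma norm_pow_sub_pow_apply_le {F G : E →L[ℝ] E} {K d : ℝ} {n : ℕ} {x : E}
    (hF : ∀ k < n, ‖F ^ k‖ ≤ K) (hFG : ∀ k < n, ‖(G - F) ((G ^ k) x)‖ ≤ d) :
    ‖(G ^ n - F ^ n) x‖ ≤ n * (K * d) := by
  induction n generalizing x with
  | zero => simp
  | succ n ih =>
    have htail : ‖(G ^ n - F ^ n) (G x)‖ ≤ n * (K * d) :=
      ih (fun k hk => hF k (by omega)) fun k hk => by
        simpa only [pow_succ, mul_apply_eq_comp] using hFG (k + 1) (by omega)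
    have hhead : ‖(F ^ n) ((G - F) x)‖ ≤ K * d :=
      (F ^ n).le_of_opNorm_le_of_le (hF n n.lt_succ_self) (by simpa using hFG 0 n.succ_pos)
    have hsplit : (G ^ (n + 1) - F ^ (n + 1)) x = (G ^ n - F ^ n) (G x) + (F ^ n) ((G - F) x) := by
      simp [pow_succ]
    rw [hsplit, Nat.cast_succ, add_mul, one_mul]
    exact (norm_add_le _ _).trans (add_le_add htail hhead)

variable {S T Z Q : ℝ → E →L[ℝ] E} {B : E →L[ℝ] E} {t K : ℝ}

lemma tendsto_div_natCast_nhdsGT_zero (ht : 0 < t) :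
    Tendsto (fun n : ℕ => t / n) atTop (𝓝[>] 0) :=
  tendsto_nhdsWithin_iff.2 ⟨tendsto_const_div_atTop_nhds_zero_nat t,
    (eventually_gt_atTop 0).mono fun _ hn => div_pos ht (Nat.cast_pos.2 hn)⟩

lemma IsC0Semigroup.tendsto_pow_of_consistent (hS : IsC0Semigroup S) (ht : 0 < t)
    (hstable : ∀ τ, 0 < τ → ∀ n : ℕ, n * τ ≤ t → ‖Z τ ^ n‖ ≤ K) {C : ℝ}
    (hbound : ∀ᶠ τ in 𝓝[>] (0 : ℝ), ‖τ⁻¹ • (S τ - Z τ)‖ ≤ C)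
    (hconsistent : ∀ x, Tendsto (fun τ : ℝ => (τ⁻¹ • (S τ - Z τ)) x) (𝓝[>] 0) (𝓝 0)) (f : E) :
    Tendsto (fun n : ℕ => (Z (t / n) ^ n) f) atTop (𝓝 (S t f)) := by
  have hK : 0 ≤ K := (norm_nonneg _).trans (hstable t ht 0 (by simpa using ht.le))
  have horbit : IsCompact ((fun x => S x f) '' Set.Icc 0 t) :=
    isCompact_Icc.image_of_continuousOn ((hS.2 f).mono fun x hx => hx.1)
  have hunif := SeminormedAddGroup.tendstoUniformlyOn_zero.1
    (tendstoUniformlyOn_zero_of_isCompact hbound hconsistent horbit)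
  rw [Metric.tendsto_nhds]
  intro ε hε
  filter_upwards [(tendsto_div_natCast_nhdsGT_zero ht).eventually
    (hunif (ε / (K * t + 1)) (by positivity)), eventually_gt_atTop 0] with n hn hn₀
  have hn₀' : (0 : ℝ) < n := Nat.cast_pos.2 hn₀
  have hτ : 0 < t / n := div_pos ht hn₀'
  have hnτ : n * (t / n) = t := mul_div_cancel₀ t hn₀'.ne'
  have hle {k : ℕ} (hk : k < n) : k * (t / n) ≤ t :=
    (mul_le_mul_of_nonneg_right (Nat.cast_le.2 hk.le) hτ.le).trans_eq hnτ
  have hlocal : ∀ k < n, ‖(S (t / n) - Z (t / n)) ((S (t / n) ^ k) f)‖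
      ≤ t / n * (ε / (K * t + 1)) := by
    intro k hk
    have hk' := hn (S (k * (t / n)) f) ⟨_, ⟨by positivity, hle hk⟩, rfl⟩
    rw [hS.1.pow_eq hτ.le]
    rw [smul_apply, norm_smul, norm_inv, Real.norm_of_nonneg hτ.le,
      inv_mul_lt_iff₀ hτ] at hk'
    exact hk'.le
  have htel := norm_pow_sub_pow_apply_le (fun k hk => hstable _ hτ k (hle hk)) hlocal
  rw [hS.1.pow_eq hτ.le, hnτ, sub_apply] at htel
  rw [dist_comm, dist_eq_norm]
  calc _ ≤ n * (K * (t / n * (ε / (K * t + 1)))) := htel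
    _ = n * (t / n) * K * ε / (K * t + 1) := by ring
    _ < ε := by
      rw [hnτ, div_lt_iff₀ (by positivity)]
      linarith [mul_comm K t, mul_comm ε (t * K)]

lemma tendsto_mul_pow_of_bounded_perturbation [CompleteSpace E] (hT : IsC0Semigroup T)
    (hS : IsC0Semigroup S) (hB : ∀ f g, InGenerator S f g → InGenerator T f (g + B f))
    (hQ : Tendsto (fun τ : ℝ => τ⁻¹ • (Q τ - 1)) (𝓝[>] 0) (𝓝 (-B))) (ht : 0 < t)
    (hstable : ∀ τ, 0 < τ → ∀ n : ℕ, n * τ ≤ t → ‖(Q τ * T τ) ^ n‖ ≤ K) (f : E) :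
    Tendsto (fun n : ℕ => ((Q (t / n) * T (t / n)) ^ n) f) atTop (𝓝 (S t f)) := by
  obtain ⟨C, hC⟩ := eventually_norm_inv_smul_sub_le_of_bounded_perturbation hT hS hB
  obtain ⟨M, -, hM⟩ := hT.exists_norm_le 1
  have hQ_le : ∀ᶠ τ in 𝓝[>] (0 : ℝ), ‖τ⁻¹ • (Q τ - 1)‖ ≤ ‖B‖ + 1 := by
    have hlt := hQ.norm.eventually (gt_mem_nhds (lt_add_one ‖-B‖))
    rw [norm_neg] at hlt
    exact hlt.mono fun τ hτ => hτ.le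
  have hsplit (τ : ℝ) : τ⁻¹ • (S τ - Q τ * T τ) =
      τ⁻¹ • (S τ - T τ) - τ⁻¹ • (Q τ - 1) * T τ := by
    rw [smul_mul_assoc, ← smul_sub, sub_mul, one_mul, sub_sub_sub_cancel_right]
  refine hS.tendsto_pow_of_consistent ht hstable (C := C + (‖B‖ + 1) * M) ?_ (fun x => ?_) f
  · filter_upwards [hC, hQ_le, Ioc_mem_nhdsGT one_pos] with τ hSτ hQτ hτ
    rw [hsplit]
    refine (norm_sub_le _ _).trans (add_le_add hSτ ((norm_mul_le _ _).trans ?_))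
    gcongr
    exact hM τ ⟨hτ.1.le, hτ.2⟩
  · have hTx : Tendsto (fun τ => T τ x) (𝓝[>] 0) (𝓝 x) := by
      simpa [hT.1.zero_apply] using
        ((hT.2 x 0 Set.self_mem_Ici).mono Set.Ioi_subset_Ici_self).tendsto
    have hQx : Tendsto (fun τ : ℝ => (τ⁻¹ • (Q τ - 1)) x) (𝓝[>] 0) (𝓝 ((-B) x)) :=
      ((ContinuousLinearMap.apply ℝ E x).continuous.tendsto (-B)).comp hQ
    have hsub := (tendsto_inv_smul_sub_of_bounded_perturbation hT hS hB x).sub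
      (tendsto_apply_of_eventually_norm_le hQ_le hQx hTx)
    rw [neg_apply, sub_self] at hsub
    refine hsub.congr fun τ => ?_
    simp [hsplit]

end ProductFormula

section MonotoneOperators

lemma abs_map_le_map_abs {F X Y : Type*} [AddGroup X] [Lattice X] [AddGroup Y] [Lattice Y]
    [FunLike F X Y] [AddMonoidHomClass F X Y] {A : F} (hA : Monotone A) (x : X) :
    |A x| ≤ A |x| :=
  abs_le'.2 ⟨hA (le_abs_self x), map_neg A x ▸ hA (neg_le_abs x)⟩

variable {X : Type*} [NormedAddCommGroup X] [NormedSpace ℝ X] [Lattice X] {A F : X →L[ℝ] X}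

lemma abs_pow_apply_le (hA : Monotone A) (hF : ∀ x, |F x| ≤ A |x|) (n : ℕ) (x : X) :
    |(F ^ n) x| ≤ (A ^ n) |x| := by
  induction n with
  | zero => simp
  | succ n ih =>
    rw [pow_succ', pow_succ', mul_apply_eq_comp, mul_apply_eq_comp]
    exact (hF _).trans (hA ih)

variable [IsOrderedAddMonoid X]

lemma ext_of_nonneg (h : ∀ x, 0 ≤ x → A x = F x) : A = F := by
  ext x
  rw [← posPart_sub_negPart x, map_sub, map_sub, h _ (posPart_nonneg x), h _ (negPart_nonneg x)]

lemma norm_pow_le_norm_pow [HasSolidNorm X] (hA : Monotone A) (hF : ∀ x, |F x| ≤ A |x|) (n : ℕ) :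
    ‖F ^ n‖ ≤ ‖A ^ n‖ := by
  refine ContinuousLinearMap.opNorm_le_bound _ (norm_nonneg _) fun x => ?_
  calc ‖(F ^ n) x‖ ≤ ‖(A ^ n) |x|‖ :=
        norm_le_norm_of_abs_le_abs ((abs_pow_apply_le hA hF n x).trans (le_abs_self _))
    _ ≤ ‖A ^ n‖ * ‖x‖ := norm_abs_eq_norm x ▸ (A ^ n).le_opNorm |x|

end MonotoneOperators

section GeometricMean

variable {X Y : Type*} [AddCommGroup X] [PartialOrder X] [Module ℝ X] {θ : ℝ}

/-- The inequality `g ≤ a ^ θ * b ^ (1 - θ)` between elements of an ordered vector space. Powers are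
avoided by writing the geometric mean of two nonnegative numbers as the infimum over `s` of
`θ * (exp ((1 - θ) * s) * a) + (1 - θ) * (exp (-(θ * s)) * b)`; in this form the inequality is
preserved by positive linear maps. -/
def GeomMeanLE (θ : ℝ) (g a b : X) : Prop :=
  ∀ s : ℝ, g ≤ (θ * Real.exp ((1 - θ) * s)) • a + ((1 - θ) * Real.exp (-(θ * s))) • b

lemma GeomMeanLE.le_arith_mean {g a b : X} (h : GeomMeanLE θ g a b) :
    g ≤ θ • a + (1 - θ) • b := by
  simpa using h 0

lemma GeomMeanLE.refl [IsOrderedAddMonoid X] [IsOrderedModule ℝ X] (hθ : θ ∈ Set.Icc 0 1) {x : X}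
    (hx : 0 ≤ x) : GeomMeanLE θ x x x := by
  intro s
  rw [← add_smul]
  refine le_smul_of_one_le_left hx ?_
  have h₁ := mul_le_mul_of_nonneg_left (Real.add_one_le_exp ((1 - θ) * s)) hθ.1
  have h₂ := mul_le_mul_of_nonneg_left (Real.add_one_le_exp (-(θ * s))) (sub_nonneg.2 hθ.2)
  linarith

lemma GeomMeanLE.map [AddCommGroup Y] [PartialOrder Y] [Module ℝ Y] {g a b : X}
    (h : GeomMeanLE θ g a b) {F : Type*} [FunLike F X Y] [LinearMapClass F ℝ X Y] {A : F}
    (hA : Monotone A) : GeomMeanLE θ (A g) (A a) (A b) := fun s => by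
  simpa only [map_add, map_smul] using hA (h s)

lemma geomMeanLE_exp_mul {g a b u u₁ u₂ : ℝ} (h : GeomMeanLE θ g a b) (hθ : θ ∈ Set.Icc 0 1)
    (ha : 0 ≤ a) (hb : 0 ≤ b) (hu : u ≤ θ * u₁ + (1 - θ) * u₂) :
    GeomMeanLE θ (Real.exp u * g) (Real.exp u₁ * a) (Real.exp u₂ * b) := by
  intro s
  obtain ⟨hθ₀, hθ₁⟩ : 0 ≤ θ ∧ 0 ≤ 1 - θ := ⟨hθ.1, sub_nonneg.2 hθ.2⟩
  simp only [smul_eq_mul]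
  -- Evaluating `h` at `s + u₁ - u₂` turns both weights into the required ones.
  calc Real.exp u * g
      ≤ Real.exp u * ((θ * Real.exp ((1 - θ) * (s + u₁ - u₂))) * a +
          ((1 - θ) * Real.exp (-(θ * (s + u₁ - u₂)))) * b) := by
        gcongr
        exact h (s + u₁ - u₂)
    _ = θ * Real.exp (u + (1 - θ) * (s + u₁ - u₂)) * a +
          (1 - θ) * Real.exp (u + -(θ * (s + u₁ - u₂))) * b := by
        simp only [Real.exp_add]; ring
    _ ≤ θ * Real.exp ((1 - θ) * s + u₁) * a + (1 - θ) * Real.exp (-(θ * s) + u₂) * b := by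
        gcongr θ * Real.exp ?_ * a + (1 - θ) * Real.exp ?_ * b <;> linarith
    _ = _ := by simp only [Real.exp_add]; ring

end GeometricMean

section Multipliers

variable {μ : Measure Ω} {p : ℝ≥0∞}

instance : IsOrderedModule ℝ (Lp ℝ p μ) :=
  .of_smul_nonneg fun c hc f hf => by
    rw [← Lp.coeFn_nonneg] at hf ⊢
    filter_upwards [hf, Lp.coeFn_smul c f] with ω hω hsmul
    rw [hsmul]
    exact smul_nonneg hc hω

lemma geomMeanLE_iff_ae {θ : ℝ} {g a b : Lp ℝ p μ} :
    GeomMeanLE θ g a b ↔ ∀ᵐ ω ∂μ, GeomMeanLE θ (g ω) (a ω) (b ω) := by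
  have hcoe (r s : ℝ) : ⇑(r • a + s • b) =ᵐ[μ] fun ω => r • a ω + s • b ω :=
    (Lp.coeFn_add _ _).trans ((Lp.coeFn_smul r a).add (Lp.coeFn_smul s b))
  constructor
  · intro h
    have hrat : ∀ᵐ ω ∂μ, ∀ q : ℚ, g ω ≤
        (θ * Real.exp ((1 - θ) * q)) • a ω + ((1 - θ) * Real.exp (-(θ * q))) • b ω :=
      ae_all_iff.2 fun q => ((Lp.coeFn_le _ _).2 (h q)).trans_eq (hcoe _ _)
    filter_upwards [hrat] with ω hω s
    refine Rat.denseRange_cast.induction_on s ?_ hω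
    exact isClosed_le (by fun_prop) (by fun_prop)
  · intro h s
    rw [← Lp.coeFn_le]
    filter_upwards [h, hcoe (θ * Real.exp ((1 - θ) * s)) ((1 - θ) * Real.exp (-(θ * s)))]
      with ω hω hω'
    exact hω' ▸ hω s

variable [Fact (1 ≤ p)]

/-- `M` is the operator of multiplication by `w` on `L_p`. Only the products `w * f` have to be
a.e. measurable, not `w` itself. -/
def IsMultiplier (M : Lp ℝ p μ →L[ℝ] Lp ℝ p μ) (w : Ω → ℝ) : Prop :=
  ∀ f : Lp ℝ p μ, M f =ᵐ[μ] fun ω => w ω * f ω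

variable {M M₁ M₂ : Lp ℝ p μ →L[ℝ] Lp ℝ p μ} {w w₁ w₂ : Ω → ℝ} {C : ℝ}

lemma exists_isMultiplier (hw : ∀ f : Lp ℝ p μ, AEStronglyMeasurable (fun ω => w ω * f ω) μ)
    (hC : ∀ ω, |w ω| ≤ C) : ∃ M : Lp ℝ p μ →L[ℝ] Lp ℝ p μ, IsMultiplier M w := by
  have hle (f : Lp ℝ p μ) : ∀ᵐ ω ∂μ, ‖w ω * f ω‖ ≤ C * ‖f ω‖ := .of_forall fun ω => by
    rw [norm_mul]
    exact mul_le_mul_of_nonneg_right (hC ω) (norm_nonneg _)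
  have hmem (f : Lp ℝ p μ) : MemLp (fun ω => w ω * f ω) p μ :=
    (Lp.memLp f).of_le_mul (hw f) (hle f)
  let M : Lp ℝ p μ →ₗ[ℝ] Lp ℝ p μ :=
    { toFun := fun f => (hmem f).toLp
      map_add' := fun f g => by
        rw [← MemLp.toLp_add, MemLp.toLp_eq_toLp_iff]
        filter_upwards [Lp.coeFn_add f g] with ω hω
        simp only [hω, Pi.add_apply, mul_add]
      map_smul' := fun c f => by
        rw [RingHom.id_apply, ← MemLp.toLp_const_smul, MemLp.toLp_eq_toLp_iff]
        filter_upwards [Lp.coeFn_smul c f] with ω hω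
        simp only [hω, Pi.smul_apply, mul_smul_comm] }
  refine ⟨M.mkContinuous C fun f => Lp.norm_le_mul_norm_of_ae_le_mul ?_,
    fun f => (hmem f).coeFn_toLp⟩
  filter_upwards [hle f, (hmem f).coeFn_toLp] with ω hω hMω
  exact hMω ▸ hω

lemma isMultiplier_one : IsMultiplier (1 : Lp ℝ p μ →L[ℝ] Lp ℝ p μ) fun _ => 1 := fun f => by
  simp

lemma IsMultiplier.add (h₁ : IsMultiplier M₁ w₁) (h₂ : IsMultiplier M₂ w₂) :
    IsMultiplier (M₁ + M₂) (w₁ + w₂) := fun f => by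
  filter_upwards [h₁ f, h₂ f, Lp.coeFn_add (M₁ f) (M₂ f)] with ω hω₁ hω₂ hadd
  rw [add_apply, hadd, Pi.add_apply, hω₁, hω₂, Pi.add_apply, add_mul]

lemma IsMultiplier.sub (h₁ : IsMultiplier M₁ w₁) (h₂ : IsMultiplier M₂ w₂) :
    IsMultiplier (M₁ - M₂) (w₁ - w₂) := fun f => by
  filter_upwards [h₁ f, h₂ f, Lp.coeFn_sub (M₁ f) (M₂ f)] with ω hω₁ hω₂ hsub
  rw [sub_apply, hsub, Pi.sub_apply, hω₁, hω₂, Pi.sub_apply, sub_mul]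

lemma IsMultiplier.const_smul (h : IsMultiplier M w) (c : ℝ) :
    IsMultiplier (c • M) (c • w) := fun f => by
  filter_upwards [h f, Lp.coeFn_smul c (M f)] with ω hω hsmul
  rw [smul_apply, hsmul, Pi.smul_apply, hω, Pi.smul_apply, smul_mul_assoc]

lemma IsMultiplier.monotone (h : IsMultiplier M w) (hw : ∀ ω, 0 ≤ w ω) : Monotone M := by
  rw [monotone_iff_map_nonneg]
  intro f hf
  rw [← Lp.coeFn_nonneg] at hf ⊢
  filter_upwards [hf, h f] with ω hω hMω
  exact hMω ▸ mul_nonneg (hw ω) hω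

lemma IsMultiplier.abs_apply_le (h : IsMultiplier M w) (hw : ∀ ω, |w ω| ≤ C) (f : Lp ℝ p μ) :
    |M f| ≤ C • |f| := by
  rw [← Lp.coeFn_le]
  filter_upwards [h f, Lp.coeFn_abs (M f), Lp.coeFn_abs f, Lp.coeFn_smul C |f|]
    with ω hω habsM habs hsmul
  rw [habsM, hω, hsmul, Pi.smul_apply, habs, abs_mul, smul_eq_mul]
  exact mul_le_mul_of_nonneg_right (hw ω) (abs_nonneg _)

lemma IsMultiplier.norm_le (h : IsMultiplier M w) (hC : 0 ≤ C) (hw : ∀ ω, |w ω| ≤ C) :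
    ‖M‖ ≤ C := by
  refine M.opNorm_le_bound hC fun f => ?_
  calc ‖M f‖ ≤ ‖C • |f|‖ :=
        norm_le_norm_of_abs_le_abs ((h.abs_apply_le hw f).trans (le_abs_self _))
    _ = C * ‖f‖ := by rw [norm_smul, Real.norm_of_nonneg hC, norm_abs_eq_norm]

lemma GeomMeanLE.map_exp_multiplier {θ : ℝ} {g a b : Lp ℝ p μ} (h : GeomMeanLE θ g a b)
    (hθ : θ ∈ Set.Icc 0 1) (ha : 0 ≤ a) (hb : 0 ≤ b) {u u₁ u₂ : Ω → ℝ}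
    (hM : IsMultiplier M fun ω => Real.exp (u ω)) (hM₁ : IsMultiplier M₁ fun ω => Real.exp (u₁ ω))
    (hM₂ : IsMultiplier M₂ fun ω => Real.exp (u₂ ω))
    (hu : ∀ ω, u ω ≤ θ * u₁ ω + (1 - θ) * u₂ ω) : GeomMeanLE θ (M g) (M₁ a) (M₂ b) := by
  rw [geomMeanLE_iff_ae] at h ⊢
  rw [← Lp.coeFn_nonneg] at ha hb
  filter_upwards [h, ha, hb, hM g, hM₁ a, hM₂ b] with ω hω haω hbω hMω hM₁ω hM₂ω
  rw [hMω, hM₁ω, hM₂ω]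
  exact geomMeanLE_exp_mul hω hθ haω hbω (hu ω)

lemma isClosed_setOf_aestronglyMeasurable_mul (w : Ω → ℝ) :
    IsClosed {f : Lp ℝ p μ | AEStronglyMeasurable (fun ω => w ω * f ω) μ} := by
  refine IsSeqClosed.isClosed fun F f hF hFf => ?_
  obtain ⟨ns, -, hns⟩ := (tendstoInMeasure_of_tendsto_Lp hFf).exists_seq_tendsto_ae
  refine aestronglyMeasurable_of_tendsto_ae atTop (fun n => hF (ns n)) ?_
  filter_upwards [hns] with ω hω using hω.const_mul (w ω)

lemma aestronglyMeasurable_comp_mul {f : Ω → ℝ} (hf : AEStronglyMeasurable f μ)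
    (hwf : AEStronglyMeasurable (fun ω => w ω * f ω) μ) {φ : ℝ → ℝ} (hφ : Measurable φ) :
    AEStronglyMeasurable (fun ω => φ (w ω) * f ω) μ := by
  -- `w` itself is not known to be measurable, but `w = (w * f) / f` wherever `f ≠ 0`.
  have hquot : (fun ω => φ (w ω) * f ω) = fun ω => φ (w ω * f ω / f ω) * f ω := by
    ext ω
    rcases eq_or_ne (f ω) 0 with hω | hω
    · simp [hω]
    · rw [mul_div_cancel_right₀ _ hω]
  rw [hquot]
  exact ((hφ.comp_aemeasurable (hwf.aemeasurable.div hf.aemeasurable)).mul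
    hf.aemeasurable).aestronglyMeasurable

end Multipliers

section PerturbedSemigroup

variable {μ : Measure Ω} {p : ℝ≥0∞} [Fact (1 ≤ p)] {T S S₁ S₂ : ℝ → Lp ℝ p μ →L[ℝ] Lp ℝ p μ}
  {W W₁ W₂ : Ω → ℝ} {t : ℝ}

lemma IsPositiveSG.monotone (hT : IsPositiveSG T) (ht : 0 ≤ t) : Monotone (T t) :=
  (monotone_iff_map_nonneg _).2 (hT t ht)

lemma IsPerturbedSG.aestronglyMeasurable_mul (hS : IsPerturbedSG μ p T S W) (f : Lp ℝ p μ) :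
    AEStronglyMeasurable (fun ω => W ω * f ω) μ := by
  refine hS.1.dense_generator_domain.induction ?_ (isClosed_setOf_aestronglyMeasurable_mul W) f
  rintro f ⟨g, hfg⟩
  obtain ⟨g₀, -, hg⟩ := (hS.2 f g).1 hfg
  refine ((Lp.aestronglyMeasurable g₀).sub (Lp.aestronglyMeasurable g)).congr ?_
  filter_upwards [hg] with ω hω
  rw [Pi.sub_apply, hω]
  ring

lemma IsPerturbedSG.inGenerator_add (hS : IsPerturbedSG μ p T S W) {B : Lp ℝ p μ →L[ℝ] Lp ℝ p μ}
    (hB : IsMultiplier B W) {f g : Lp ℝ p μ} (hfg : InGenerator S f g) :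
    InGenerator T f (g + B f) := by
  obtain ⟨g₀, hg₀, hg⟩ := (hS.2 f g).1 hfg
  convert hg₀
  refine Lp.ext ?_
  filter_upwards [Lp.coeFn_add g (B f), hg, hB f] with ω hadd hgω hBω
  rw [hadd, Pi.add_apply, hgω, hBω, sub_add_cancel]

variable {c : ℝ}

lemma tendsto_inv_smul_exp_multiplier_sub_one {Q : ℝ → Lp ℝ p μ →L[ℝ] Lp ℝ p μ}
    {B : Lp ℝ p μ →L[ℝ] Lp ℝ p μ} (hQ : ∀ τ, IsMultiplier (Q τ) fun ω => Real.exp (-(τ * W ω)))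
    (hB : IsMultiplier B W) (hW : ∀ ω, |W ω| ≤ c) :
    Tendsto (fun τ : ℝ => τ⁻¹ • (Q τ - 1)) (𝓝[>] 0) (𝓝 (-B)) := by
  have hsmall : ∀ᶠ τ in 𝓝[>] (0 : ℝ), τ * |c| < 1 := by
    refine (((continuous_mul_const |c|).tendsto' 0 0 (zero_mul _)).mono_left
      nhdsWithin_le_nhds).eventually (gt_mem_nhds one_pos)
  have hbound : ∀ᶠ τ in 𝓝[>] (0 : ℝ), ‖τ⁻¹ • (Q τ - 1) + B‖ ≤ τ * c ^ 2 := by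
    filter_upwards [hsmall, self_mem_nhdsWithin] with τ hτc (hτ : 0 < τ)
    refine ((((hQ τ).sub isMultiplier_one).const_smul τ⁻¹).add hB).norm_le (by positivity)
      fun ω => ?_
    have hWc : |W ω| ≤ |c| := (hW ω).trans (le_abs_self c)
    have hexp := Real.abs_exp_sub_one_sub_id_le (x := -(τ * W ω)) <| by
      rw [abs_neg, abs_mul, abs_of_pos hτ]
      exact (mul_le_mul_of_nonneg_left hWc hτ.le).trans hτc.le
    have hsq : W ω ^ 2 ≤ c ^ 2 := sq_le_sq.2 hWc
    simp only [Pi.add_apply, Pi.smul_apply, Pi.sub_apply, smul_eq_mul]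
    calc |τ⁻¹ * (Real.exp (-(τ * W ω)) - 1) + W ω|
        = τ⁻¹ * |Real.exp (-(τ * W ω)) - 1 - -(τ * W ω)| := by
          rw [← abs_of_pos (inv_pos.2 hτ), ← abs_mul, abs_of_pos (inv_pos.2 hτ)]
          congr 1
          field_simp
          ring
      _ ≤ τ⁻¹ * (-(τ * W ω)) ^ 2 := by gcongr
      _ = τ * W ω ^ 2 := by field_simp
      _ ≤ τ * c ^ 2 := by gcongr
  have hlim : Tendsto (fun τ : ℝ => τ * c ^ 2) (𝓝[>] 0) (𝓝 0) :=
    ((continuous_mul_const (c ^ 2)).tendsto' 0 0 (zero_mul _)).mono_left nhdsWithin_le_nhds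
  simpa using (squeeze_zero_norm' hbound hlim).sub_const B

lemma norm_exp_multiplier_mul_pow_le (hT : IsC0Semigroup T) (hTpos : IsPositiveSG T)
    {Q : ℝ → Lp ℝ p μ →L[ℝ] Lp ℝ p μ}
    (hQ : ∀ τ, IsMultiplier (Q τ) fun ω => Real.exp (-(τ * W ω))) (hW : ∀ ω, |W ω| ≤ c)
    {K : ℝ} (hK : ∀ s ∈ Set.Icc 0 t, ‖T s‖ ≤ K) {τ : ℝ} (hτ : 0 ≤ τ) {n : ℕ} (hn : n * τ ≤ t) :
    ‖(Q τ * T τ) ^ n‖ ≤ Real.exp (t * |c|) * K := by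
  have hexp (ω : Ω) : |Real.exp (-(τ * W ω))| ≤ Real.exp (τ * |c|) := by
    rw [Real.abs_exp, Real.exp_le_exp, ← mul_neg]
    exact mul_le_mul_of_nonneg_left ((neg_le_abs _).trans ((hW ω).trans (le_abs_self c))) hτ
  have hmono : Monotone (Real.exp (τ * |c|) • T τ) := fun f g hfg =>
    smul_le_smul_of_nonneg_left (hTpos.monotone hτ hfg) (Real.exp_pos _).le
  have hdom (f : Lp ℝ p μ) : |(Q τ * T τ) f| ≤ (Real.exp (τ * |c|) • T τ) |f| :=
    ((hQ τ).abs_apply_le hexp (T τ f)).trans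
      (smul_le_smul_of_nonneg_left (abs_map_le_map_abs (hTpos.monotone hτ) f) (Real.exp_pos _).le)
  calc ‖(Q τ * T τ) ^ n‖ ≤ ‖(Real.exp (τ * |c|) • T τ) ^ n‖ := norm_pow_le_norm_pow hmono hdom n
    _ = Real.exp (n * τ * |c|) * ‖T (n * τ)‖ := by
      rw [smul_pow, hT.1.pow_eq hτ, norm_smul, ← Real.exp_nat_mul, Real.norm_eq_abs,
        Real.abs_exp, mul_assoc]
    _ ≤ Real.exp (t * |c|) * K := by
      gcongr
      exact hK _ ⟨by positivity, hn⟩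

lemma IsPerturbedSG.exists_tendsto_product (hS : IsPerturbedSG μ p T S W) (hT : IsC0Semigroup T)
    (hTpos : IsPositiveSG T) (hW : ∀ ω, |W ω| ≤ c) :
    ∃ Q : ℝ → Lp ℝ p μ →L[ℝ] Lp ℝ p μ,
      (∀ τ, IsMultiplier (Q τ) fun ω => Real.exp (-(τ * W ω))) ∧
      ∀ t, 0 < t → ∀ f, Tendsto (fun n : ℕ => ((Q (t / n) * T (t / n)) ^ n) f) atTop
        (𝓝 (S t f)) := by
  obtain ⟨B, hB⟩ := exists_isMultiplier (p := p) hS.aestronglyMeasurable_mul hW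
  have hexp (τ : ℝ) : ∃ Q : Lp ℝ p μ →L[ℝ] Lp ℝ p μ,
      IsMultiplier Q fun ω => Real.exp (-(τ * W ω)) := by
    refine exists_isMultiplier (C := Real.exp (|τ| * c)) (fun f => aestronglyMeasurable_comp_mul
      (Lp.aestronglyMeasurable f) (hS.aestronglyMeasurable_mul f)
      (φ := fun x => Real.exp (-(τ * x))) (by fun_prop)) fun ω => ?_
    rw [Real.abs_exp, Real.exp_le_exp]
    exact (neg_le_abs _).trans
      ((abs_mul τ (W ω)).trans_le (mul_le_mul_of_nonneg_left (hW ω) (abs_nonneg τ)))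
  choose Q hQ using hexp
  refine ⟨Q, hQ, fun t ht f => ?_⟩
  obtain ⟨K, -, hK⟩ := hT.exists_norm_le t
  exact tendsto_mul_pow_of_bounded_perturbation hT hS.1 (fun _ _ => hS.inGenerator_add hB)
    (tendsto_inv_smul_exp_multiplier_sub_one hQ hB hW) ht
    (fun τ hτ n hn => norm_exp_multiplier_mul_pow_le hT hTpos hQ hW hK hτ.le hn) f

lemma geomMeanLE_product (hTpos : IsPositiveSG T) {θ τ : ℝ} (hθ : θ ∈ Set.Icc 0 1) (hτ : 0 ≤ τ)
    {Q Q₁ Q₂ : Lp ℝ p μ →L[ℝ] Lp ℝ p μ} (hQ : IsMultiplier Q fun ω => Real.exp (-(τ * W ω)))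
    (hQ₁ : IsMultiplier Q₁ fun ω => Real.exp (-(τ * W₁ ω)))
    (hQ₂ : IsMultiplier Q₂ fun ω => Real.exp (-(τ * W₂ ω)))
    (hW : ∀ ω, θ * W₁ ω + (1 - θ) * W₂ ω ≤ W ω + c) {f : Lp ℝ p μ} (hf : 0 ≤ f) (n : ℕ) :
    GeomMeanLE θ (Real.exp (-(n * τ * c)) • ((Q * T τ) ^ n) f)
      (((Q₁ * T τ) ^ n) f) (((Q₂ * T τ) ^ n) f) := by
  have hpos {P : Lp ℝ p μ →L[ℝ] Lp ℝ p μ} {V : Ω → ℝ}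
      (hP : IsMultiplier P fun ω => Real.exp (V ω)) (n : ℕ) : 0 ≤ ((P * T τ) ^ n) f := by
    induction n with
    | zero => simpa using hf
    | succ n ih =>
      rw [pow_succ', mul_apply_eq_comp, mul_apply_eq_comp]
      simpa using hP.monotone (fun ω => (Real.exp_pos _).le) (hTpos τ hτ _ ih)
  induction n with
  | zero => simpa using GeomMeanLE.refl hθ hf
  | succ n ih =>
    have hscaled : IsMultiplier (Real.exp (-(τ * c)) • Q)
        fun ω => Real.exp (-(τ * W ω) - τ * c) := by
      convert hQ.const_smul (Real.exp (-(τ * c))) using 1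
      ext ω
      rw [Pi.smul_apply, smul_eq_mul, ← Real.exp_add]
      ring_nf
    convert (ih.map (hTpos.monotone hτ)).map_exp_multiplier hθ (hTpos τ hτ _ (hpos hQ₁ n))
      (hTpos τ hτ _ (hpos hQ₂ n)) hscaled hQ₁ hQ₂
      (fun ω => by linarith [mul_le_mul_of_nonneg_left (hW ω) hτ]) using 1
    · rw [pow_succ', mul_apply_eq_comp, mul_apply_eq_comp, map_smul, map_smul, smul_apply,
        smul_smul, ← Real.exp_add]
      push_cast
      ring_nf
    · rw [pow_succ', mul_apply_eq_comp, mul_apply_eq_comp]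
    · rw [pow_succ', mul_apply_eq_comp, mul_apply_eq_comp]

lemma IsPerturbedSG.exp_smul_apply_le (hT : IsC0Semigroup T) (hTpos : IsPositiveSG T)
    (hS : IsPerturbedSG μ p T S W) (hS₁ : IsPerturbedSG μ p T S₁ W₁)
    (hS₂ : IsPerturbedSG μ p T S₂ W₂) {C C₁ C₂ : ℝ} (hC : ∀ ω, |W ω| ≤ C)
    (hC₁ : ∀ ω, |W₁ ω| ≤ C₁) (hC₂ : ∀ ω, |W₂ ω| ≤ C₂) {θ : ℝ} (hθ : θ ∈ Set.Icc 0 1)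
    (hW : ∀ ω, θ * W₁ ω + (1 - θ) * W₂ ω ≤ W ω + c) (ht : 0 ≤ t) {f : Lp ℝ p μ} (hf : 0 ≤ f) :
    Real.exp (-(t * c)) • S t f ≤ θ • S₁ t f + (1 - θ) • S₂ t f := by
  rcases ht.eq_or_lt with rfl | ht
  · simp [hS.1.1.zero_apply, hS₁.1.1.zero_apply, hS₂.1.1.zero_apply, ← add_smul]
  obtain ⟨Q, hQ, hQS⟩ := hS.exists_tendsto_product hT hTpos hC
  obtain ⟨Q₁, hQ₁, hQS₁⟩ := hS₁.exists_tendsto_product hT hTpos hC₁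
  obtain ⟨Q₂, hQ₂, hQS₂⟩ := hS₂.exists_tendsto_product hT hTpos hC₂
  refine le_of_tendsto_of_tendsto ((hQS t ht f).const_smul _)
    (((hQS₁ t ht f).const_smul θ).add ((hQS₂ t ht f).const_smul (1 - θ))) ?_
  filter_upwards [eventually_ne_atTop 0] with n hn
  have hmean := geomMeanLE_product hTpos hθ (by positivity) (hQ (t / n)) (hQ₁ _) (hQ₂ _) hW hf n
  rw [mul_div_cancel₀ t (Nat.cast_ne_zero.2 hn)] at hmean
  exact hmean.le_arith_mean

end PerturbedSemigroup

section AbsorptionRates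

variable {X : Type*} {U U₁ U₂ : X → ℝ≥0∞} {c ε θ : ℝ}

lemma abs_trunc_le (V : X → ℝ≥0∞) (n : ℕ) (ω : X) : |trunc V n ω| ≤ n := by
  rw [trunc, abs_of_nonneg toReal_nonneg]
  exact toReal_le_of_le_ofReal n.cast_nonneg (by simp)

lemma trunc_min_natCast (V : X → ℝ≥0∞) (m n : ℕ) :
    trunc (fun ω => min (V ω) m) n = trunc V (min m n) := by
  ext ω
  simp only [trunc, min_assoc, (Nat.mono_cast (α := ℝ≥0∞)).map_min]

lemma add_trunc_le_trunc_add (hθ : θ ∈ Set.Icc 0 1) (hc : 0 ≤ c)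
    (hU : ∀ ω, ENNReal.ofReal θ * U₁ ω + ENNReal.ofReal (1 - θ) * U₂ ω ≤ U ω + ENNReal.ofReal c)
    (n : ℕ) (ω : X) :
    θ * trunc U₁ n ω + (1 - θ) * trunc U₂ n ω ≤ trunc U n ω + c := by
  have hmin (u : ℝ≥0∞) : min u (n : ℝ≥0∞) ≠ ∞ := ne_top_of_le_ne_top (natCast_ne_top n)
    (min_le_right _ _)
  have hle : ENNReal.ofReal θ * min (U₁ ω) n + ENNReal.ofReal (1 - θ) * min (U₂ ω) n
      ≤ min (U ω) n + ENNReal.ofReal c := by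
    rw [← min_add_add_right]
    refine le_min (le_trans (by gcongr <;> exact min_le_left _ _) (hU ω)) ?_
    calc ENNReal.ofReal θ * min (U₁ ω) n + ENNReal.ofReal (1 - θ) * min (U₂ ω) n
        ≤ ENNReal.ofReal θ * n + ENNReal.ofReal (1 - θ) * n := by
          gcongr <;> exact min_le_right _ _
      _ = n := by
          rw [← add_mul, ← ofReal_add hθ.1 (sub_nonneg.2 hθ.2), add_sub_cancel, ofReal_one,
            one_mul]
      _ ≤ n + ENNReal.ofReal c := le_self_add
  have htop : min (U ω) n + ENNReal.ofReal c ≠ ∞ := add_ne_top.2 ⟨hmin _, ofReal_ne_top⟩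
  have hreal := toReal_mono htop hle
  rwa [toReal_add (mul_ne_top ofReal_ne_top (hmin _)) (mul_ne_top ofReal_ne_top (hmin _)),
    toReal_add (hmin _) ofReal_ne_top, toReal_mul, toReal_mul, toReal_ofReal hθ.1,
    toReal_ofReal (sub_nonneg.2 hθ.2), toReal_ofReal hc] at hreal

lemma smulRate_le_resid_add (hε : ε ≤ 1) (V : X → ℝ≥0∞) (n : ℕ) (ω : X) :
    smulRate ε V ω ≤ resid V n ω + ENNReal.ofReal (ε * n) := by
  have hε' : ENNReal.ofReal ε ≤ 1 := ofReal_le_one.2 hε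
  calc ENNReal.ofReal ε * V ω
      = ENNReal.ofReal ε * resid V n ω + ENNReal.ofReal ε * min (V ω) n := by
        rw [← mul_add, resid, tsub_add_cancel_of_le (min_le_left _ _)]
    _ ≤ 1 * resid V n ω + ENNReal.ofReal ε * n := by
        gcongr
        exact min_le_right _ _
    _ = resid V n ω + ENNReal.ofReal (ε * n) := by
        rw [one_mul, ofReal_mul' n.cast_nonneg, ofReal_natCast]

lemma resid_add_min_smulRate_le (hε : 0 ≤ ε) (V : X → ℝ≥0∞) {m n : ℕ} (hmn : m ≤ ε * n) (ω : X) :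
    ENNReal.ofReal ε * resid V n ω + ENNReal.ofReal (1 - ε) * min (smulRate ε V ω) m
      ≤ smulRate ε V ω := by
  have hone : ENNReal.ofReal (1 - ε) ≤ 1 := ofReal_le_one.2 (sub_le_self 1 hε)
  have hm : (m : ℝ≥0∞) ≤ ENNReal.ofReal ε * n := by
    rw [← ofReal_natCast n, ← ofReal_mul hε, ← ofReal_natCast m]
    exact ofReal_le_ofReal hmn
  calc ENNReal.ofReal ε * resid V n ω + ENNReal.ofReal (1 - ε) * min (smulRate ε V ω) m
      ≤ ENNReal.ofReal ε * resid V n ω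
          + 1 * min (ENNReal.ofReal ε * V ω) (ENNReal.ofReal ε * n) := by
        gcongr
        exact le_rfl
    _ = smulRate ε V ω := by
        rw [one_mul, ← mul_min, ← mul_add, resid, tsub_add_cancel_of_le (min_le_left _ _),
          smulRate]

end AbsorptionRates

section AbsorptionSemigroups

variable {μ : Measure Ω} {p : ℝ≥0∞} [Fact (1 ≤ p)] {T S S₁ S₂ : ℝ → Lp ℝ p μ →L[ℝ] Lp ℝ p μ}
  {U U₁ U₂ V : Ω → ℝ≥0∞} {c ε θ t : ℝ} {f : Lp ℝ p μ}

lemma IsAbsorptionSG.exp_smul_apply_le (hT : IsC0Semigroup T) (hTpos : IsPositiveSG T)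
    (hS : IsAbsorptionSG μ p T U S) (hS₁ : IsAbsorptionSG μ p T U₁ S₁)
    (hS₂ : IsAbsorptionSG μ p T U₂ S₂) (hθ : θ ∈ Set.Icc 0 1) (hc : 0 ≤ c)
    (hU : ∀ ω, ENNReal.ofReal θ * U₁ ω + ENNReal.ofReal (1 - θ) * U₂ ω ≤ U ω + ENNReal.ofReal c)
    (ht : 0 ≤ t) (hf : 0 ≤ f) :
    Real.exp (-(t * c)) • S t f ≤ θ • S₁ t f + (1 - θ) • S₂ t f := by
  obtain ⟨P, hP, hPS⟩ := hS
  obtain ⟨P₁, hP₁, hPS₁⟩ := hS₁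
  obtain ⟨P₂, hP₂, hPS₂⟩ := hS₂
  exact le_of_tendsto_of_tendsto' ((hPS t ht f).const_smul _)
    (((hPS₁ t ht f).const_smul θ).add ((hPS₂ t ht f).const_smul (1 - θ))) fun n =>
      (hP n).exp_smul_apply_le hT hTpos (hP₁ n) (hP₂ n) (abs_trunc_le U n) (abs_trunc_le U₁ n)
        (abs_trunc_le U₂ n) hθ (add_trunc_le_trunc_add hθ hc hU n) ht hf

lemma isAbsorptionSG_min_natCast {S : ℕ → ℝ → Lp ℝ p μ →L[ℝ] Lp ℝ p μ}
    (hS : ∀ n, IsPerturbedSG μ p T (S n) (trunc V n)) (m : ℕ) :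
    IsAbsorptionSG μ p T (fun ω => min (V ω) m) (S m) := by
  refine ⟨fun n => S (min m n), fun n => ?_, fun t _ f => tendsto_const_nhds.congr' ?_⟩
  · rw [trunc_min_natCast]
    exact hS _
  · filter_upwards [eventually_ge_atTop m] with n hn
    rw [min_eq_left hn]

lemma IsAbsorptionSG.exp_smul_resid_apply_le {R : ℝ → Lp ℝ p μ →L[ℝ] Lp ℝ p μ} {n : ℕ}
    (hT : IsC0Semigroup T) (hTpos : IsPositiveSG T) (hR : IsAbsorptionSG μ p T (resid V n) R)
    (hS : IsAbsorptionSG μ p T (smulRate ε V) S) (hε : ε ∈ Set.Icc 0 1) (ht : 0 ≤ t)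
    (hf : 0 ≤ f) : Real.exp (-(t * (ε * n))) • R t f ≤ S t f := by
  simpa using hR.exp_smul_apply_le (θ := 1) hT hTpos hS hS (by simp)
    (mul_nonneg hε.1 n.cast_nonneg)
    (fun ω => by simpa using smulRate_le_resid_add hε.2 V n ω) ht hf

lemma IsAbsorptionSG.smulRate_apply_le_of_tendsto_resid {R : ℕ → ℝ → Lp ℝ p μ →L[ℝ] Lp ℝ p μ}
    {g : Lp ℝ p μ} (hT : IsC0Semigroup T) (hTpos : IsPositiveSG T)
    (hS : IsAbsorptionSG μ p T (smulRate ε V) S)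
    (hR : ∀ n, IsAbsorptionSG μ p T (resid V n) (R n)) (hε : 0 < ε) (hε₁ : ε ≤ 1) (ht : 0 ≤ t)
    (hf : 0 ≤ f) (hg : Tendsto (fun n => R n t f) atTop (𝓝 g)) : S t f ≤ g := by
  obtain ⟨P, hP, hPS⟩ := id hS
  have hmn (m : ℕ) : ∀ᶠ n : ℕ in atTop, (m : ℝ) ≤ ε * n :=
    (tendsto_natCast_atTop_atTop.const_mul_atTop hε).eventually_ge_atTop _
  have hPm (m : ℕ) : S t f ≤ ε • g + (1 - ε) • P m t f := by
    refine ge_of_tendsto ((hg.const_smul ε).add_const _) ?_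
    filter_upwards [hmn m] with n hn
    simpa using hS.exp_smul_apply_le hT hTpos (hR n) (isAbsorptionSG_min_natCast hP m)
      ⟨hε.le, hε₁⟩ le_rfl (fun ω => by simpa using resid_add_min_smulRate_le hε.le V hn ω) ht hf
  have hle : S t f ≤ ε • g + (1 - ε) • S t f :=
    ge_of_tendsto' (((hPS t ht f).const_smul (1 - ε)).const_add _) hPm
  have hsub : S t f - (1 - ε) • S t f = ε • S t f := by module
  exact le_of_smul_le_smul_of_pos_left (hsub ▸ sub_le_iff_le_add.2 hle) hε

end AbsorptionSemigroups

end Absorption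

open Absorption

theorem statement0_general
    {Ω : Type*} [MeasurableSpace Ω] (μ : Measure Ω) (p : ℝ≥0∞) [Fact (1 ≤ p)]
    (T : ℝ → Lp ℝ p μ →L[ℝ] Lp ℝ p μ)
    (hT : IsC0Semigroup T) (hTpos : IsPositiveSG T)
    (V : Ω → ℝ≥0∞)
    (Sε : ℝ → ℝ → Lp ℝ p μ →L[ℝ] Lp ℝ p μ)
    (hSε : ∀ ε : ℝ, 0 < ε → ε ≤ 1 → IsAbsorptionSG μ p T (smulRate ε V) (Sε ε))
    (R : ℕ → ℝ → Lp ℝ p μ →L[ℝ] Lp ℝ p μ)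
    (hR : ∀ n : ℕ, IsAbsorptionSG μ p T (resid V n) (R n))
    (L₁ L₂ : ℝ → Lp ℝ p μ →L[ℝ] Lp ℝ p μ)
    (hL₁ : ∀ t : ℝ, 0 ≤ t → ∀ f : Lp ℝ p μ,
      Tendsto (fun ε : ℝ => Sε ε t f) (𝓝[>] (0 : ℝ)) (𝓝 (L₁ t f)))
    (hL₂ : ∀ t : ℝ, 0 ≤ t → ∀ f : Lp ℝ p μ,
      Tendsto (fun n : ℕ => R n t f) atTop (𝓝 (L₂ t f))) :
    ∀ t : ℝ, 0 ≤ t → L₁ t = L₂ t := by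
  refine fun t ht => ext_of_nonneg fun f hf => le_antisymm ?_ ?_
  · refine le_of_tendsto (hL₁ t ht f) ?_
    filter_upwards [Ioc_mem_nhdsGT one_pos] with ε hε
    exact (hSε ε hε.1 hε.2).smulRate_apply_le_of_tendsto_resid hT hTpos hR hε.1 hε.2 ht hf
      (hL₂ t ht f)
  · refine le_of_tendsto' (hL₂ t ht f) fun n => ?_
    have hexp : Tendsto (fun ε : ℝ => Real.exp (-(t * (ε * n))) • R n t f) (𝓝[>] 0)
        (𝓝 (R n t f)) :=
      (Continuous.tendsto' (by fun_prop) 0 _ (by simp)).mono_left nhdsWithin_le_nhds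
    refine le_of_tendsto_of_tendsto hexp (hL₁ t ht f) ?_
    filter_upwards [Ioc_mem_nhdsGT one_pos] with ε hε
    exact (hR n).exp_smul_resid_apply_le hT hTpos (hSε ε hε.1 hε.2) ⟨hε.1.le, hε.2⟩ ht hf

/-- For a `T`-admissible `V : Ω → [0,∞]`, the two strong limits
`T_{0,V} = s-lim_{ε→0+} T_{εV}` and `(T_V)_{−V} = s-lim_{n→∞} T_{V−V∧n}` coincide. -/
theorem statement0
    {Ω : Type*} [MeasurableSpace Ω] (μ : Measure Ω) (p : ℝ≥0∞) [Fact (1 ≤ p)] (hp : p ≠ ∞)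
    (T : ℝ → Lp ℝ p μ →L[ℝ] Lp ℝ p μ)
    (hT : IsC0Semigroup T) (hTpos : IsPositiveSG T)
    (V : Ω → ℝ≥0∞) (hV : Admissible μ p T V)
    -- the absorption semigroups `T_{εV}` for `ε ∈ (0,1]`
    (Sε : ℝ → ℝ → Lp ℝ p μ →L[ℝ] Lp ℝ p μ)
    (hSε : ∀ ε : ℝ, 0 < ε → ε ≤ 1 → IsAbsorptionSG μ p T (smulRate ε V) (Sε ε))
    -- the absorption semigroups `T_{V − V∧n}`
    (R : ℕ → ℝ → Lp ℝ p μ →L[ℝ] Lp ℝ p μ)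
    (hR : ∀ n : ℕ, IsAbsorptionSG μ p T (resid V n) (R n))
    -- `T_{0,V} = s-lim_{ε→0+} T_{εV}` and `(T_V)_{−V} = s-lim_{n→∞} T_{V−V∧n}`
    (L₁ L₂ : ℝ → Lp ℝ p μ →L[ℝ] Lp ℝ p μ)
    (hL₁ : ∀ t : ℝ, 0 ≤ t → ∀ f : Lp ℝ p μ,
      Tendsto (fun ε : ℝ => Sε ε t f) (𝓝[>] (0 : ℝ)) (𝓝 (L₁ t f)))
    (hL₂ : ∀ t : ℝ, 0 ≤ t → ∀ f : Lp ℝ p μ,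
      Tendsto (fun n : ℕ => R n t f) atTop (𝓝 (L₂ t f))) :
    ∀ t : ℝ, 0 ≤ t → L₁ t = L₂ t :=
  statement0_general μ p T hT hTpos V Sε hSε R hR L₁ L₂ hL₁ hL₂
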